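/- Let G be a finite simple connected graph that is not sequentially distance preserving. Then G contains an induced cycle of length k for some k ≥ 5. -/

import Mathlib

open SimpleGraph

/-- `G[A]` is an isometric subgraph of `G`: it is connected and distances
within `G[A]` agree with distances in `G`. -/
def IsIsomSub {V : Type*} (G : SimpleGraph V) (A : Set V) : Prop :=
  (G.induce A).Connected ∧
    ∀ u v : A, (G.induce A).dist u v = G.dist (u : V) (v : V)

/-- `G` is sequentially distance preserving: there is an ordering
`v_1, …, v_n` of the vertices (given by `e`, where `v_{j+1} = e j`) such that
for every `i ≥ 1` deleting the first `i` vertices leaves an isometric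
subgraph. -/
def SeqDistPres {V : Type*} [Fintype V] (G : SimpleGraph V) : Prop :=
  ∃ e : Fin (Fintype.card V) ≃ V,
    ∀ i : ℕ, 1 ≤ i → i < Fintype.card V →
      IsIsomSub G {v : V | ∃ j : Fin (Fintype.card V), i ≤ (j : ℕ) ∧ e j = v}

/-!
Deleting a vertex `v` from an isometric subgraph leaves an isometric subgraph as soon as any two
nonadjacent neighbours of `v` have a common neighbour other than `v`, since shortest paths can then
be rerouted around `v`. In a graph without induced cycles of length at least five, this holds for
every avoidable vertex `v`, that is, one such that each induced path `a - v - b` lies on an induced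
cycle: that cycle has length four, and its fourth vertex is the required common neighbour.

Every finite nonempty graph has an avoidable vertex (Ohtsuki, Cheung and Fujisawa). Among the
connected vertex sets that do not dominate the graph, take a maximal one `D`, and let `R` be the set
of vertices outside `D` without a neighbour in `D`. By maximality every neighbour of `D` outside `D`
is adjacent to all of `R`. Hence a vertex `v` that is avoidable in `G[R]` is avoidable in `G`: two
nonadjacent neighbours of `v` lie either both in `R` or both next to `D`, and in the latter case a
shortest path between them through `D` closes up to an induced cycle through `v`.
-/

section InducedCycles

variable {V : Type*} {G : SimpleGraph V} {D : Set V} {a b v : V}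

theorem cycleGraph_adj_zero_succ {n : ℕ} {i : Fin (n + 1)} :
    (cycleGraph (n + 2)).Adj 0 i.succ ↔ i = 0 ∨ i = Fin.last n := by
  rw [cycleGraph_adj', zero_sub, sub_zero, Fin.val_neg, if_neg (Fin.succ_ne_zero i)]
  simp only [Fin.val_succ, Fin.ext_iff, Fin.val_zero, Fin.val_last]
  omega

theorem cycleGraph_adj_succ_succ {n : ℕ} {i j : Fin (n + 1)} :
    (cycleGraph (n + 2)).Adj i.succ j.succ ↔ (pathGraph (n + 1)).Adj i j := by
  wlog hij : i ≤ j generalizing i j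
  · rw [adj_comm, this (le_of_not_ge hij), adj_comm]
  obtain rfl | hlt := hij.eq_or_lt
  · simp
  have hji : (j.succ - i.succ).val = j - i := by
    simp [Fin.sub_val_of_le (Fin.succ_le_succ_iff.2 hij)]
  have hij' : (i.succ - j.succ).val = n + 2 + i - j := by
    rw [Fin.coe_sub_iff_lt.2 (Fin.succ_lt_succ_iff.2 hlt), Fin.val_succ, Fin.val_succ]
    omega
  rw [cycleGraph_adj', pathGraph_adj, hji, hij']
  omega

theorem exists_cycleGraph_embedding_of_pathGraph_embedding {n : ℕ} (f : pathGraph (n + 1) ↪g G)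
    (hv : ∀ i, f i ≠ v) (hadj : ∀ i, G.Adj v (f i) ↔ i = 0 ∨ i = Fin.last n) :
    ∃ g : cycleGraph (n + 2) ↪g G, g 0 = v ∧ ∀ i, g i.succ = f i := by
  refine ⟨⟨⟨Fin.cons v f, Fin.cons_injective_iff.2 ⟨fun ⟨i, hi⟩ => hv i hi, f.injective⟩⟩, ?_⟩,
    rfl, fun _ => rfl⟩
  intro i j
  change G.Adj (Fin.cons (α := fun _ => V) v f i) (Fin.cons (α := fun _ => V) v f j) ↔ _
  cases i using Fin.cases with
  | zero =>
    cases j using Fin.cases with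
    | zero => simp
    | succ j => simp [hadj, cycleGraph_adj_zero_succ]
  | succ i =>
    cases j using Fin.cases with
    | zero => simp [adj_comm _ _ v, adj_comm _ _ (0 : Fin (n + 2)), hadj, cycleGraph_adj_zero_succ]
    | succ j => simp [cycleGraph_adj_succ_succ]

theorem exists_pathGraph_embedding_of_reachable (h : G.Reachable a b) :
    ∃ f : pathGraph (G.dist a b + 1) ↪g G, f 0 = a ∧ f (Fin.last _) = b := by
  obtain ⟨p, hp⟩ := h.exists_walk_length_eq_dist
  have dist_getVert {i j : ℕ} (hij : i ≤ j) (hj : j ≤ p.length) :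
      G.dist (p.getVert i) (p.getVert j) = j - i := by
    have hsub := ((p.take j).isSubwalk_drop i).trans (p.isSubwalk_take j)
    have := length_eq_dist_of_subwalk hp hsub
    simp [hij, hj] at this
    omega
  have adj_iff {i j : Fin (p.length + 1)} (hij : i ≤ j) :
      G.Adj (p.getVert i) (p.getVert j) ↔ (pathGraph (p.length + 1)).Adj i j := by
    rw [← dist_eq_one_iff_adj, dist_getVert hij (by omega), pathGraph_adj]
    omega
  have hinj : Function.Injective fun i : Fin (p.length + 1) => p.getVert i := fun i j hij =>
    Fin.ext ((p.isPath_of_length_eq_dist hp).getVert_injOn (by grind) (by grind) hij)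
  rw [← hp]
  refine ⟨⟨⟨_, hinj⟩, fun {i j} => ?_⟩, p.getVert_zero, p.getVert_length⟩
  obtain hij | hij := le_total i j
  · exact adj_iff hij
  · rw [adj_comm, (pathGraph _).adj_comm]
    exact adj_iff hij

theorem exists_pathGraph_embedding_through (hD : (G.induce D).Connected)
    (ha : ∃ d ∈ D, G.Adj d a) (hb : ∃ d ∈ D, G.Adj d b) :
    ∃ n, ∃ f : pathGraph (n + 1) ↪g G, f 0 = a ∧ f (Fin.last n) = b ∧
      ∀ i, i ≠ 0 → i ≠ Fin.last n → f i ∈ D := by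
  obtain ⟨x, hx, hxa⟩ := ha
  obtain ⟨y, hy, hyb⟩ := hb
  have hDa : (G.induce (D ∪ {a})).Connected :=
    connected_induce_union hD.preconnected .of_subsingleton hx rfl hxa
  have hDab : (G.induce (D ∪ {a} ∪ {b})).Connected :=
    connected_induce_union hDa.preconnected .of_subsingleton (.inl hy) rfl hyb
  obtain ⟨f, hfa, hfb⟩ := exists_pathGraph_embedding_of_reachable
    (hDab.preconnected ⟨a, .inl (.inr rfl)⟩ ⟨b, .inr rfl⟩)
  refine ⟨_, (Embedding.induce _).comp f, congrArg Subtype.val hfa, congrArg Subtype.val hfb,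
    fun i hi₀ hi₁ => ?_⟩
  obtain (hi | hi) | hi := (f i).2
  · exact hi
  · exact absurd (f.injective (Subtype.ext (hi.trans (congrArg Subtype.val hfa).symm))) hi₀
  · exact absurd (f.injective (Subtype.ext (hi.trans (congrArg Subtype.val hfb).symm))) hi₁

end InducedCycles

section AvoidableVertices

variable {V : Type*} {G : SimpleGraph V} {D : Set V} {a b s v x : V}

/-- A vertex `v` is avoidable if every induced path `a - v - b` lies on an induced cycle. The cycle
is indexed so that `v` is at position `0` and its neighbours `a` and `b` are at `1` and `-1`; it has
length at least four because `a` and `b` are not adjacent. -/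
def IsAvoidable (G : SimpleGraph V) (v : V) : Prop :=
  ∀ ⦃a b⦄, G.Adj v a → G.Adj v b → a ≠ b → ¬ G.Adj a b →
    ∃ n, ∃ f : cycleGraph (n + 4) ↪g G, f 0 = v ∧ f 1 = a ∧ f (-1) = b

/-- The vertices outside the closed neighbourhood of `D`: they do not lie in `D` and have no
neighbour there. The set `D` is dominating if and only if there are none. -/
def nonNeighborSet (G : SimpleGraph V) (D : Set V) : Set V :=
  {x | x ∉ D ∧ ∀ d ∈ D, ¬ G.Adj d x}

theorem exists_cycleGraph_embedding_through (hD : (G.induce D).Connected)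
    (hv : v ∈ nonNeighborSet G D) (hva : G.Adj v a) (hvb : G.Adj v b) (hab : a ≠ b)
    (hnab : ¬ G.Adj a b) (ha : ∃ d ∈ D, G.Adj d a) (hb : ∃ d ∈ D, G.Adj d b) :
    ∃ n, ∃ f : cycleGraph (n + 4) ↪g G, f 0 = v ∧ f 1 = a ∧ f (-1) = b := by
  obtain ⟨n, f, rfl, rfl, hfD⟩ := exists_pathGraph_embedding_through hD ha hb
  match n with
  | 0 => exact absurd rfl hab
  | 1 => exact absurd (f.map_adj_iff.2 (by simp [pathGraph_adj])) hnab
  | n + 2 =>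
    have hne (i) : f i ≠ v := by
      rintro rfl
      exact hv.1 (hfD i (fun h => hva.ne (by rw [h])) (fun h => hvb.ne (by rw [h])))
    have hadj (i) : G.Adj v (f i) ↔ i = 0 ∨ i = Fin.last (n + 2) := by
      refine ⟨fun h => ?_, ?_⟩
      · by_contra! hi
        exact hv.2 _ (hfD i hi.1 hi.2) h.symm
      · rintro (rfl | rfl) <;> assumption
    obtain ⟨g, hg₀, hg⟩ := exists_cycleGraph_embedding_of_pathGraph_embedding f hne hadj
    refine ⟨n, g, hg₀, hg 0, ?_⟩
    rw [← hg, Fin.succ_last, ← Fin.neg_last, neg_neg]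

theorem adj_of_maximal_connected_nonNeighborSet
    (hD : Maximal (fun D => (G.induce D).Connected ∧ (nonNeighborSet G D).Nonempty) D)
    (hsD : s ∉ D) (hs : s ∉ nonNeighborSet G D) (hx : x ∈ nonNeighborSet G D) : G.Adj s x := by
  by_contra hsx
  obtain ⟨d, hd, hds⟩ : ∃ d ∈ D, G.Adj d s := by simpa [nonNeighborSet, hsD] using hs
  have hconn : (G.induce (D ∪ {s})).Connected :=
    connected_induce_union hD.prop.1.preconnected .of_subsingleton hd rfl hds
  have hxs : x ∈ nonNeighborSet G (D ∪ {s}) := by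
    refine ⟨?_, ?_⟩
    · rintro (h | rfl)
      exacts [hx.1 h, hs hx]
    · rintro d (h | rfl)
      exacts [hx.2 d h, hsx]
  exact hsD (hD.le_of_ge ⟨hconn, x, hxs⟩ Set.subset_union_left (.inr rfl))

theorem IsAvoidable.of_induce_nonNeighborSet {v : nonNeighborSet G D}
    (hD : Maximal (fun D => (G.induce D).Connected ∧ (nonNeighborSet G D).Nonempty) D)
    (hv : IsAvoidable (G.induce (nonNeighborSet G D)) v) : IsAvoidable G v := by
  intro a b hva hvb hab hnab
  have notMem {c} (hvc : G.Adj v c) : c ∉ D := fun hc => v.2.2 c hc hvc.symm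
  have exists_adj {c} (hvc : G.Adj v c) (hc : c ∉ nonNeighborSet G D) : ∃ d ∈ D, G.Adj d c := by
    simpa [nonNeighborSet, notMem hvc] using hc
  by_cases ha : a ∈ nonNeighborSet G D <;> by_cases hb : b ∈ nonNeighborSet G D
  · obtain ⟨n, f, hfv, hfa, hfb⟩ :=
      hv (a := ⟨a, ha⟩) (b := ⟨b, hb⟩) hva hvb (by simpa using hab) hnab
    exact ⟨n, (Embedding.induce _).comp f, congrArg Subtype.val hfv, congrArg Subtype.val hfa,
      congrArg Subtype.val hfb⟩
  · exact absurd (adj_of_maximal_connected_nonNeighborSet hD (notMem hvb) hb ha).symm hnab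
  · exact absurd (adj_of_maximal_connected_nonNeighborSet hD (notMem hva) ha hb) hnab
  · exact exists_cycleGraph_embedding_through hD.prop.1 v.2 hva hvb hab hnab
      (exists_adj hva ha) (exists_adj hvb hb)

theorem exists_isAvoidable {V : Type*} [Finite V] [Nonempty V] (G : SimpleGraph V) :
    ∃ v, IsAvoidable G v := by
  induction hn : Nat.card V using Nat.strong_induction_on generalizing V with
  | _ n ih =>
    subst hn
    by_cases hex : ∃ D, (G.induce D).Connected ∧ (nonNeighborSet G D).Nonempty
    · obtain ⟨D, hD⟩ := (Set.toFinite {D | (G.induce D).Connected ∧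
        (nonNeighborSet G D).Nonempty}).exists_maximal hex
      obtain ⟨⟨d, hd⟩⟩ := hD.prop.1.nonempty
      have : Nonempty (nonNeighborSet G D) := hD.prop.2.to_subtype
      have hlt : Nat.card (nonNeighborSet G D) < Nat.card V :=
        Set.ncard_lt_card fun h => (h ▸ Set.mem_univ d : d ∈ nonNeighborSet G D).1 hd
      obtain ⟨v, hv⟩ := ih _ hlt (G.induce (nonNeighborSet G D)) rfl
      exact ⟨v, hv.of_induce_nonNeighborSet hD⟩
    · have adj_of_ne (a b : V) (hab : a ≠ b) : G.Adj a b := by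
        by_contra hnab
        exact hex ⟨{a}, .of_subsingleton, b, by simp [nonNeighborSet, hab.symm, hnab]⟩
      obtain ⟨v⟩ := ‹Nonempty V›
      exact ⟨v, fun a b _ _ hab hnab => absurd (adj_of_ne a b hab) hnab⟩

theorem IsAvoidable.exists_common_neighbor (hv : IsAvoidable G v)
    (hG : ∀ k, 5 ≤ k → ¬ cycleGraph k ⊴ G) (hva : G.Adj v a) (hvb : G.Adj v b) (hab : a ≠ b)
    (hnab : ¬ G.Adj a b) : ∃ w, w ≠ v ∧ G.Adj a w ∧ G.Adj w b := by
  obtain ⟨n, f, rfl, rfl, rfl⟩ := hv hva hvb hab hnab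
  obtain rfl : n = 0 := by
    by_contra hn
    exact hG (n + 4) (by omega) ⟨f⟩
  exact ⟨f 2, f.injective.ne (by decide), f.map_adj_iff.2 (by decide), f.map_adj_iff.2 (by decide)⟩

end AvoidableVertices

section IsometricSubgraphs

variable {V : Type*} {G : SimpleGraph V} {S : Set V} {v x y : V}

theorem isIsomSub_iff_exists_walk : IsIsomSub G S ↔ S.Nonempty ∧
    ∀ x ∈ S, ∀ y ∈ S, ∃ p : G.Walk x y, (∀ z ∈ p.support, z ∈ S) ∧ p.length = G.dist x y := by
  constructor
  · rintro ⟨hconn, hdist⟩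
    refine ⟨Set.nonempty_coe_sort.1 hconn.nonempty, fun x hx y hy => ?_⟩
    obtain ⟨p, hp⟩ := hconn.exists_walk_length_eq_dist ⟨x, hx⟩ ⟨y, hy⟩
    refine ⟨p.map (Embedding.induce S).toHom, fun z hz => ?_,
      (p.length_map _).trans (hp.trans (hdist _ _))⟩
    obtain ⟨w, -, rfl⟩ := List.mem_map.1 (Walk.support_map _ p ▸ hz)
    exact w.2
  · rintro ⟨hS, hwalk⟩
    have exists_walk (x y : S) : ∃ q : (G.induce S).Walk x y, q.length = G.dist (x : V) y := by
      obtain ⟨p, hpS, hp⟩ := hwalk x x.2 y y.2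
      refine ⟨p.induce S hpS, ?_⟩
      rw [← hp, ← Walk.length_map (Embedding.induce S).toHom, Walk.map_induce]
      rfl
    have := hS.to_subtype
    refine ⟨⟨fun x y => (exists_walk x y).choose.reachable⟩, fun x y => ?_⟩
    obtain ⟨q, hq⟩ := exists_walk x y
    refine le_antisymm (hq ▸ dist_le q) ?_
    obtain ⟨p, hp⟩ := q.reachable.exists_walk_length_eq_dist
    rw [← hp, ← p.length_map (Embedding.induce S).toHom]
    exact dist_le _

theorem exists_walk_sdiff_singleton_length_le_two
    (hv : ∀ a ∈ S, ∀ b ∈ S, G.Adj v a → G.Adj v b → a ≠ b → ¬ G.Adj a b →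
      ∃ w ∈ S, w ≠ v ∧ G.Adj a w ∧ G.Adj w b)
    (hx : x ∈ S) (hy : y ∈ S) (hvx : G.Adj v x) (hvy : G.Adj v y) :
    ∃ p : G.Walk x y, (∀ z ∈ p.support, z ∈ S \ {v}) ∧ p.length ≤ 2 := by
  have hxv : x ∈ S \ {v} := ⟨hx, hvx.ne'⟩
  have hyv : y ∈ S \ {v} := ⟨hy, hvy.ne'⟩
  obtain rfl | hxy := eq_or_ne x y
  · exact ⟨.nil, by simpa using hxv, by simp⟩
  by_cases hadj : G.Adj x y
  · exact ⟨hadj.toWalk, by simpa using ⟨hxv, hyv⟩, by simp⟩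
  obtain ⟨w, hwS, hwv, hxw, hwy⟩ := hv x hx y hy hvx hvy hxy hadj
  exact ⟨.cons hxw hwy.toWalk, by simpa using ⟨hxv, ⟨hwS, hwv⟩, hyv⟩, by simp⟩

theorem exists_walk_sdiff_singleton_length_le
    (hv : ∀ a ∈ S, ∀ b ∈ S, G.Adj v a → G.Adj v b → a ≠ b → ¬ G.Adj a b →
      ∃ w ∈ S, w ≠ v ∧ G.Adj a w ∧ G.Adj w b)
    (p : G.Walk x y) (hp : ∀ z ∈ p.support, z ∈ S) (hx : x ≠ v) (hy : y ≠ v) :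
    ∃ q : G.Walk x y, (∀ z ∈ q.support, z ∈ S \ {v}) ∧ q.length ≤ p.length := by
  induction hn : p.length using Nat.strong_induction_on generalizing x with
  | _ n ih =>
    subst hn
    match p with
    | .nil => exact ⟨.nil, by simpa [hx] using hp, le_rfl⟩
    | .cons (v := z) hxz p =>
      rw [Walk.support_cons, List.forall_mem_cons] at hp
      obtain rfl | hzv := eq_or_ne z v
      · match p with
        | .nil => exact absurd rfl hy
        | .cons (v := b) hzb p =>
          rw [Walk.support_cons, List.forall_mem_cons] at hp
          obtain ⟨q, hqS, hq⟩ := exists_walk_sdiff_singleton_length_le_two hv hp.1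
            (hp.2.2 b p.start_mem_support) hxz.symm hzb
          obtain ⟨r, hrS, hr⟩ := ih _ (by simp only [Walk.length_cons]; omega) p hp.2.2 hzb.ne' rfl
          refine ⟨q.append r, fun u hu => ?_, ?_⟩
          · exact ((Walk.mem_support_append_iff q r).1 hu).elim (hqS u) (hrS u)
          · simp only [Walk.length_append, Walk.length_cons]
            omega
      · obtain ⟨q, hqS, hq⟩ := ih _ (by simp) p hp.2 hzv rfl
        exact ⟨.cons hxz q, by simpa using ⟨⟨hp.1, hx⟩, hqS⟩, by simpa using hq⟩

theorem IsIsomSub.sdiff_singleton (hS : IsIsomSub G S) (hne : (S \ {v}).Nonempty)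
    (hv : ∀ a ∈ S, ∀ b ∈ S, G.Adj v a → G.Adj v b → a ≠ b → ¬ G.Adj a b →
      ∃ w ∈ S, w ≠ v ∧ G.Adj a w ∧ G.Adj w b) :
    IsIsomSub G (S \ {v}) := by
  refine isIsomSub_iff_exists_walk.2 ⟨hne, fun x hx y hy => ?_⟩
  obtain ⟨p, hpS, hp⟩ := (isIsomSub_iff_exists_walk.1 hS).2 x hx.1 y hy.1
  obtain ⟨q, hqS, hq⟩ := exists_walk_sdiff_singleton_length_le hv p hpS hx.2 hy.2
  exact ⟨q, hqS, le_antisymm (hp ▸ hq) (dist_le q)⟩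

theorem isIsomSub_univ (hG : G.Connected) : IsIsomSub G Set.univ :=
  isIsomSub_iff_exists_walk.2 ⟨have := hG.nonempty; Set.univ_nonempty, fun x _ y _ =>
    (hG.exists_walk_length_eq_dist x y).imp fun _ hp => ⟨fun _ _ => trivial, hp⟩⟩

theorem exists_isIsomSub_sdiff_singleton [Finite V] (hG : ∀ k, 5 ≤ k → ¬ cycleGraph k ⊴ G)
    (hS : IsIsomSub G S) : ∃ v ∈ S, (S \ {v}).Nonempty → IsIsomSub G (S \ {v}) := by
  have : Nonempty S := hS.1.nonempty
  obtain ⟨⟨v, hvS⟩, hv⟩ := exists_isAvoidable (G.induce S)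
  refine ⟨v, hvS, fun hne => hS.sdiff_singleton hne fun a ha b hb hva hvb hab hnab => ?_⟩
  have hGS (k) (hk : 5 ≤ k) : ¬ cycleGraph k ⊴ G.induce S := fun ⟨f⟩ =>
    hG k hk ⟨(Embedding.induce S).comp f⟩
  obtain ⟨⟨w, hwS⟩, hwv, haw, hwb⟩ := hv.exists_common_neighbor hGS
    (show (G.induce S).Adj ⟨v, hvS⟩ ⟨a, ha⟩ from hva)
    (show (G.induce S).Adj ⟨v, hvS⟩ ⟨b, hb⟩ from hvb) (by simpa using hab) hnab
  exact ⟨w, hwS, by simpa using hwv, haw, hwb⟩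

end IsometricSubgraphs

section EliminationOrders

variable {α : Type*} {P : Set α → Prop}

theorem exists_list_forall_drop_of_forall_exists_sdiff_singleton [Finite α]
    (hP : ∀ S : Set α, S.Nonempty → P S → ∃ a ∈ S, P (S \ {a})) (S : Set α) (hS : P S) :
    ∃ l : List α, l.Nodup ∧ {a | a ∈ l} = S ∧ ∀ i, P {a | a ∈ l.drop i} := by
  induction S using WellFoundedLT.induction with
  | _ S ih =>
    obtain rfl | hne := S.eq_empty_or_nonempty
    · exact ⟨[], by simpa using hS⟩
    obtain ⟨a, ha, hPa⟩ := hP S hne hS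
    obtain ⟨l, hl, hlS, hlP⟩ := ih (S \ {a}) (Set.sdiff_singleton_ssubset.2 ha) hPa
    have hal : {b | b ∈ a :: l} = S := by
      simp only [List.mem_cons, Set.ofPred_or, hlS]
      simpa using ha
    have hnotMem : a ∉ l := fun h => (hlS.subset h).2 rfl
    refine ⟨a :: l, List.nodup_cons.2 ⟨hnotMem, hl⟩, hal, ?_⟩
    rintro (_ | i)
    · rwa [List.drop_zero, hal]
    · exact hlP i

theorem exists_equiv_forall_tail_of_forall_exists_sdiff_singleton [Fintype α]
    (hP : ∀ S : Set α, S.Nonempty → P S → ∃ a ∈ S, P (S \ {a})) (huniv : P Set.univ) :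
    ∃ e : Fin (Fintype.card α) ≃ α, ∀ i : ℕ,
      P {a | ∃ j : Fin (Fintype.card α), i ≤ j ∧ e j = a} := by
  classical
  obtain ⟨l, hl, hmem, hlP⟩ :=
    exists_list_forall_drop_of_forall_exists_sdiff_singleton hP Set.univ huniv
  let e := hl.getEquivOfForallMemList l (fun a => hmem.ge trivial)
  have hlen : Fintype.card α = l.length := by simpa using (Fintype.card_congr e).symm
  refine ⟨(finCongr hlen).trans e, fun i => ?_⟩
  convert hlP i using 1
  ext a
  simp only [Set.mem_ofPred_eq, List.mem_iff_getElem, List.getElem_drop, List.length_drop]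
  constructor
  · rintro ⟨j, hj, rfl⟩
    exact ⟨j - i, by omega, by simp [e, Nat.add_sub_cancel' hj]⟩
  · rintro ⟨j, hj, rfl⟩
    exact ⟨⟨i + j, by omega⟩, by simp, by simp [e]⟩

end EliminationOrders

theorem seqDistPres_of_forall_not_cycleGraph_isIndContained {V : Type*} [Fintype V]
    {G : SimpleGraph V} (hconn : G.Connected) (hG : ∀ k, 5 ≤ k → ¬ cycleGraph k ⊴ G) :
    SeqDistPres G := by
  obtain ⟨e, he⟩ := exists_equiv_forall_tail_of_forall_exists_sdiff_singleton
    (P := fun S => S.Nonempty → IsIsomSub G S)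
    (fun S hne hS => exists_isIsomSub_sdiff_singleton hG (hS hne)) (fun _ => isIsomSub_univ hconn)
  exact ⟨e, fun i _ hi => he i ⟨_, ⟨i, hi⟩, le_rfl, rfl⟩⟩

/-- If a finite simple connected graph is not sequentially distance
preserving, then it contains an induced cycle of length `k` for some
`k ≥ 5`. -/
theorem not_sdp_implies_long_induced_cycle {V : Type*} [Fintype V]
    (G : SimpleGraph V) (hG : G.Connected) (hnsdp : ¬ SeqDistPres G) :
    ∃ k : ℕ, 5 ≤ k ∧ ∃ s : Set V, Nonempty ((G.induce s) ≃g cycleGraph k) := by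
  by_contra! hno
  refine hnsdp (seqDistPres_of_forall_not_cycleGraph_isIndContained hG fun k hk hcycle => ?_)
  obtain ⟨s, ⟨f⟩⟩ := isIndContained_iff_exists_iso_induce.1 hcycle
  exact (hno k hk s).false f.symm
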